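/- arXiv:1711.05452 — 3 statements merged into one kernel-verified Lean document; each statement's English description precedes it below -/
import Mathlib

section
/- Let (K, φ) be a topological dynamical system and let q : K → L be a projection onto its maximal trivial factor. Then the Koopman operator T_φ is mean ergodic on C(K) if and only if for every l ∈ L the fiber system (K_l, φ_l) is uniquely ergodic. -/
open MeasureTheory Filter

/-- The Koopman operator of `φ` is mean ergodic on `C(K)`: for every continuous function
`f`, the Cesàro averages `A_n f = (1/n) ∑_{k<n} f ∘ φ^k` converge in the sup norm
(i.e. uniformly) to some function. -/
def MeanErgodic {K : Type*} [TopologicalSpace K] (φ : K → K) : Prop :=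
  ∀ f : C(K, ℂ), ∃ g : K → ℂ,
    TendstoUniformly (fun (n : ℕ) (x : K) => (n : ℂ)⁻¹ • ∑ k ∈ Finset.range n, f (φ^[k] x))
      g atTop

/-- A topological dynamical system is uniquely ergodic if it admits exactly one invariant
regular Borel probability measure. -/
def UniquelyErgodic {S : Type*} [TopologicalSpace S] (ψ : S → S) : Prop :=
  letI : MeasurableSpace S := borel S
  ∃! μ : Measure S, IsProbabilityMeasure μ ∧ μ.Regular ∧ MeasurePreserving ψ μ μ

/-- The restriction of `φ` to the fiber `q⁻¹ {l}`. -/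
def fiberMap {K L : Type*} (φ : K → K) (q : K → L) (hinv : ∀ x, q (φ x) = q x) (l : L)
    (x : ↥(q ⁻¹' {l})) : ↥(q ⁻¹' {l}) :=
  ⟨φ ↑x, by rw [Set.mem_preimage, Set.mem_singleton_iff, hinv]; exact x.2⟩


open Topology in
/-- Riesz representation of an invariant state. -/
theorem exists_inv_measure {S : Type*} [TopologicalSpace S] [CompactSpace S] [T2Space S]
    [MeasurableSpace S] [BorelSpace S] (ψ : S → S) (hψ : Continuous ψ)
    (Λ : C(S, ℝ) →ₗ[ℝ] ℝ) (hpos : ∀ f : C(S, ℝ), (∀ x, 0 ≤ f x) → 0 ≤ Λ f) (hone : Λ 1 = 1)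
    (hinv : ∀ f : C(S, ℝ), Λ (f.comp ⟨ψ, hψ⟩) = Λ f) :
    ∃ μ : Measure S, (IsProbabilityMeasure μ ∧ μ.Regular ∧ MeasurePreserving ψ μ μ) ∧
      ∀ f : C(S, ℝ), Λ f = ∫ x, f x ∂μ := by
  let Λ₀ : CompactlySupportedContinuousMap S ℝ →ₗ[ℝ] ℝ :=
    { toFun := fun f => Λ f.toContinuousMap
      map_add' := fun f g => Λ.map_add f.toContinuousMap g.toContinuousMap
      map_smul' := fun c f => Λ.map_smul c f.toContinuousMap }
  let Λ' : CompactlySupportedContinuousMap S ℝ →ₚ[ℝ] ℝ :=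
    PositiveLinearMap.mk₀ Λ₀ (fun f hf => hpos _ (fun x => hf x))
  let μ := RealRMK.rieszMeasure Λ'
  have hint : ∀ f : C(S, ℝ), Λ f = ∫ x, f x ∂μ := fun f =>
    (RealRMK.integral_rieszMeasure Λ' (CompactlySupportedContinuousMap.continuousMapEquiv f)).symm
  have hreg : μ.Regular := RealRMK.regular_rieszMeasure Λ'
  have hfin : IsFiniteMeasure μ := inferInstance
  have hprob : IsProbabilityMeasure μ := by
    have h1 := hint 1
    rw [hone] at h1
    simp only [ContinuousMap.one_apply, integral_const, smul_eq_mul, mul_one] at h1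
    refine ⟨?_⟩
    rw [← ofReal_measureReal (μ := μ) (s := Set.univ), ← h1, ENNReal.ofReal_one]
  refine ⟨μ, ⟨hprob, hreg, hψ.measurable, ?_⟩, hint⟩
  have : (Measure.map ψ μ).InnerRegularCompactLTTop :=
    Measure.InnerRegularCompactLTTop.map_of_continuous hψ
  have : (Measure.map ψ μ).Regular := inferInstance
  apply Measure.ext_of_integral_eq_on_compactlySupported
  intro f
  rw [integral_map (f := fun x => f x) hψ.aemeasurable
    f.toContinuousMap.continuous.aestronglyMeasurable]
  have := hinv f.toContinuousMap
  rw [hint, hint] at this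
  exact this

theorem measure_eq_of_integral {S : Type*} [TopologicalSpace S] [CompactSpace S] [T2Space S]
    [MeasurableSpace S] [BorelSpace S] (μ ν : Measure S) [μ.Regular] [ν.Regular]
    (h : ∀ f : C(S, ℝ), ∫ x, f x ∂μ = ∫ x, f x ∂ν) : μ = ν :=
  Measure.ext_of_integral_eq_on_compactlySupported fun f => h f.toContinuousMap

/-- Limits of positive functionals. -/
theorem exists_limit_functional {ι X : Type*} [TopologicalSpace X] (F : Filter ι) [F.NeBot]
    (M : ι → C(X, ℝ) →ₗ[ℝ] ℝ) (hpos : ∀ i f, (∀ x, 0 ≤ f x) → 0 ≤ M i f)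
    (hlim : ∀ f, ∃ a, Tendsto (fun i => M i f) F (nhds a)) :
    ∃ Λ : C(X, ℝ) →ₗ[ℝ] ℝ, (∀ f : C(X, ℝ), (∀ x, 0 ≤ f x) → 0 ≤ Λ f) ∧
      ∀ f, Tendsto (fun i => M i f) F (nhds (Λ f)) := by
  choose a ha using hlim
  refine ⟨{ toFun := a, map_add' := fun f g => ?_, map_smul' := fun c f => ?_ }, ?_, ha⟩
  · refine tendsto_nhds_unique (ha (f + g)) ?_
    simpa using (ha f).add (ha g)
  · refine tendsto_nhds_unique (ha (c • f)) ?_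
    simpa using (ha f).const_mul c
  · intro f hf
    exact ge_of_tendsto' (ha f) (fun i => hpos i f hf)

/-- Cesàro averaging functional. -/
noncomputable def cesaro {X : Type*} [TopologicalSpace X] (φ : X → X) (n : ℕ) (x : X) :
    C(X, ℝ) →ₗ[ℝ] ℝ where
  toFun f := (n : ℝ)⁻¹ * ∑ k ∈ Finset.range n, f (φ^[k] x)
  map_add' f g := by simp [Finset.sum_add_distrib, mul_add]
  map_smul' c f := by
    simp only [ContinuousMap.smul_apply, smul_eq_mul, ← Finset.mul_sum, RingHom.id_apply]
    ring

theorem cesaro_apply {X : Type*} [TopologicalSpace X] (φ : X → X) (n : ℕ) (x : X) (f : C(X, ℝ)) :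
    cesaro φ n x f = (n : ℝ)⁻¹ * ∑ k ∈ Finset.range n, f (φ^[k] x) := rfl

theorem cesaro_nonneg {X : Type*} [TopologicalSpace X] (φ : X → X) (n : ℕ) (x : X) (f : C(X, ℝ))
    (hf : ∀ x, 0 ≤ f x) : 0 ≤ cesaro φ n x f := by
  rw [cesaro_apply]
  exact mul_nonneg (by positivity) (Finset.sum_nonneg fun k _ => hf _)

/-- averages of an invariant function -/
theorem cesaro_of_inv {X : Type*} [TopologicalSpace X] (φ : X → X) (n : ℕ) (hn : n ≠ 0) (x : X)
    (f : C(X, ℝ)) (hf : ∀ x, f (φ x) = f x) : cesaro φ n x f = f x := by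
  have h : ∀ k, f (φ^[k] x) = f x := by
    intro k
    induction k with
    | zero => rfl
    | succ k ih => rw [Function.iterate_succ_apply', hf, ih]
  rw [cesaro_apply]
  simp only [h, Finset.sum_const, Finset.card_range, nsmul_eq_mul]
  field_simp

theorem cesaro_shift {X : Type*} [TopologicalSpace X] [CompactSpace X] (φ : X → X)
    (hφ : Continuous φ) (n : ℕ) (x : X) (f : C(X, ℝ)) :
    |cesaro φ n x (f.comp ⟨φ, hφ⟩) - cesaro φ n x f| ≤ (n : ℝ)⁻¹ * (2 * ‖f‖) := by
  have : cesaro φ n x (f.comp ⟨φ, hφ⟩) - cesaro φ n x f = (n : ℝ)⁻¹ * (f (φ^[n] x) - f x) := by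
    rw [cesaro_apply, cesaro_apply, ← mul_sub, ← Finset.sum_sub_distrib]
    congr 1
    have := Finset.sum_range_sub (fun k => f (φ^[k] x)) n
    simpa [Function.iterate_succ_apply'] using this
  rw [this, abs_mul, abs_of_nonneg (by positivity : (0:ℝ) ≤ (n : ℝ)⁻¹)]
  have h1 := f.norm_coe_le_norm (φ^[n] x)
  have h2 := f.norm_coe_le_norm x
  rw [Real.norm_eq_abs] at h1 h2
  gcongr
  calc |f (φ^[n] x) - f x| ≤ |f (φ^[n] x)| + |f x| := abs_sub _ _
    _ ≤ _ := by linarith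

/-- A state on `C(K)` concentrated on the fibre over `l` is nonnegative on functions that are
nonnegative on the fibre. -/
theorem fiber_nonneg {K L : Type*} [TopologicalSpace K] [CompactSpace K] [T2Space K]
    [TopologicalSpace L] [CompactSpace L] [T2Space L]
    (q : K → L) (hq : Continuous q) (l : L)
    (Λ : C(K, ℝ) →ₗ[ℝ] ℝ) (hpos : ∀ f : C(K, ℝ), (∀ x, 0 ≤ f x) → 0 ≤ Λ f)
    (hql : ∀ h : C(L, ℝ), Λ (h.comp ⟨q, hq⟩) = h l)
    (f : C(K, ℝ)) (hf : ∀ x, q x = l → 0 ≤ f x) : 0 ≤ Λ f := by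
  refine le_of_forall_pos_le_add fun ε hε => ?_
  have hcl : IsClosed {x | f x ≤ -ε} := isClosed_le f.continuous continuous_const
  have himg : IsClosed (q '' {x | f x ≤ -ε}) := (hcl.isCompact.image hq).isClosed
  obtain ⟨h, h0, h1, h01⟩ := exists_continuous_zero_one_of_isClosed
    (isClosed_singleton (x := l)) himg (by
      rw [Set.disjoint_singleton_left]
      rintro ⟨x, hx, hxl⟩
      have := hf x hxl
      simp only [Set.mem_ofPred_eq] at hx
      linarith)
  have key := hpos (f + ε • (1 : C(L, ℝ)).comp ⟨q, hq⟩ + ‖f‖ • h.comp ⟨q, hq⟩) (by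
    intro x
    simp only [ContinuousMap.add_apply, ContinuousMap.smul_apply, ContinuousMap.comp_apply,
      ContinuousMap.coe_mk, ContinuousMap.one_apply, smul_eq_mul, mul_one]
    have hx := f.norm_coe_le_norm x
    rw [Real.norm_eq_abs] at hx
    have hx' := neg_abs_le (f x)
    by_cases hfx : f x ≤ -ε
    · have : h (q x) = 1 := h1 ⟨x, hfx, rfl⟩
      rw [this]; linarith
    · have := mul_nonneg (norm_nonneg f) (h01 (q x)).1
      push Not at hfx
      linarith)
  rw [map_add, map_add, map_smul, map_smul, hql, hql, h0 rfl] at key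
  simpa using key

/-- Such a state is integration against the unique invariant measure of the fibre. -/
theorem state_eq_integral {K L : Type*} [TopologicalSpace K] [CompactSpace K] [T2Space K]
    [TopologicalSpace L] [CompactSpace L] [T2Space L]
    (φ : K → K) (hφ : Continuous φ) (q : K → L) (hq : Continuous q)
    (hinv : ∀ x, q (φ x) = q x) (l : L)
    [MeasurableSpace ↥(q ⁻¹' {l})] [BorelSpace ↥(q ⁻¹' {l})]
    (μ : Measure ↥(q ⁻¹' {l}))
    (hμ : ∀ ν : Measure ↥(q ⁻¹' {l}), (IsProbabilityMeasure ν ∧ ν.Regular ∧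
      MeasurePreserving (fiberMap φ q hinv l) ν ν) → ν = μ)
    (Λ : C(K, ℝ) →ₗ[ℝ] ℝ) (hpos : ∀ f : C(K, ℝ), (∀ x, 0 ≤ f x) → 0 ≤ Λ f)
    (hql : ∀ h : C(L, ℝ), Λ (h.comp ⟨q, hq⟩) = h l)
    (hΛ : ∀ f : C(K, ℝ), Λ (f.comp ⟨φ, hφ⟩) = Λ f)
    (f : C(K, ℝ)) : Λ f = ∫ x, f x.1 ∂μ := by
  have hcl : IsClosed (q ⁻¹' {l}) := isClosed_singleton.preimage hq
  have : CompactSpace ↥(q ⁻¹' {l}) := isCompact_iff_compactSpace.1 hcl.isCompact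
  have hnn := fiber_nonneg q hq l Λ hpos hql
  have heq : ∀ f g : C(K, ℝ), (∀ x, q x = l → f x = g x) → Λ f = Λ g := by
    intro f g hfg
    have h1 := hnn (f - g) (fun x hx => by simp [hfg x hx])
    have h2 := hnn (g - f) (fun x hx => by simp [hfg x hx])
    rw [map_sub] at h1 h2
    linarith
  have hext : ∀ f : C(↥(q ⁻¹' {l}), ℝ), ∃ g : C(K, ℝ), ∀ x : ↥(q ⁻¹' {l}), g x = f x := by
    intro f
    obtain ⟨g, -, hg⟩ := ContinuousMap.exists_restrict_eq_forall_mem_of_closed f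
      (t := Set.univ) (fun _ => trivial) Set.univ_nonempty hcl
    exact ⟨g, fun x => congrArg (fun u : C(↥(q ⁻¹' {l}), ℝ) => u x) hg⟩
  choose E hE using hext
  have hψ : Continuous (fiberMap φ q hinv l) :=
    (hφ.comp continuous_subtype_val).subtype_mk _
  obtain ⟨ν, hν, hνΛ⟩ := exists_inv_measure (fiberMap φ q hinv l) hψ
    { toFun := fun f => Λ (E f)
      map_add' := fun f g => by
        rw [← map_add]
        refine heq _ _ fun x hx => ?_
        have h1 := hE (f + g) ⟨x, hx⟩
        have h2 := hE f ⟨x, hx⟩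
        have h3 := hE g ⟨x, hx⟩
        simp only [ContinuousMap.add_apply] at *
        rw [h1, h2, h3]
      map_smul' := fun c f => by
        rw [RingHom.id_apply, ← map_smul]
        refine heq _ _ fun x hx => ?_
        have h1 := hE (c • f) ⟨x, hx⟩
        have h2 := hE f ⟨x, hx⟩
        simp only [ContinuousMap.smul_apply] at *
        rw [h1, h2] }
    (fun f hf => hnn _ fun x hx => by
      have := hE f ⟨x, hx⟩
      simp only at this
      rw [this]; exact hf _)
    (by
      have h1 := hql 1
      refine Eq.trans (heq _ _ fun x hx => ?_) h1
      exact hE 1 ⟨x, hx⟩)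
    (fun f => by
      refine Eq.trans (heq _ _ fun x hx => ?_) (hΛ (E f))
      exact (hE (f.comp ⟨_, hψ⟩) ⟨x, hx⟩).trans (hE f (fiberMap φ q hinv l ⟨x, hx⟩)).symm)
  rw [← hμ ν hν]
  have := hνΛ (f.comp ⟨_, continuous_subtype_val⟩)
  refine Eq.trans (heq _ _ fun x hx => ?_) this
  exact (hE (f.comp ⟨_, continuous_subtype_val⟩) ⟨x, hx⟩).symm

/-- Convergence of approximately invariant states along an ultrafilter. -/
theorem tendsto_integral {ι K L : Type*} [TopologicalSpace K] [CompactSpace K] [T2Space K]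
    [TopologicalSpace L] [CompactSpace L] [T2Space L]
    (φ : K → K) (hφ : Continuous φ) (q : K → L) (hq : Continuous q)
    (hinv : ∀ x, q (φ x) = q x) (l : L)
    [MeasurableSpace ↥(q ⁻¹' {l})] [BorelSpace ↥(q ⁻¹' {l})]
    (μ : Measure ↥(q ⁻¹' {l}))
    (hμ : ∀ ν : Measure ↥(q ⁻¹' {l}), (IsProbabilityMeasure ν ∧ ν.Regular ∧
      MeasurePreserving (fiberMap φ q hinv l) ν ν) → ν = μ)
    (U : Ultrafilter ι) (M : ι → C(K, ℝ) →ₗ[ℝ] ℝ)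
    (hpos : ∀ i f, (∀ x, 0 ≤ f x) → 0 ≤ M i f)
    (hql : ∀ h : C(L, ℝ), Tendsto (fun i => M i (h.comp ⟨q, hq⟩)) U (nhds (h l)))
    (hM : ∀ f : C(K, ℝ), Tendsto (fun i => M i (f.comp ⟨φ, hφ⟩) - M i f) U (nhds 0))
    (f : C(K, ℝ)) : Tendsto (fun i => M i f) U (nhds (∫ x, f x.1 ∂μ)) := by
  have hb : ∀ f : C(K, ℝ), ∀ᶠ i in (U : Filter ι), M i f ∈ Set.Icc (-(‖f‖ * 2)) (‖f‖ * 2) := by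
    intro f
    have h1 : Tendsto (fun i => M i 1) U (nhds 1) := hql 1
    filter_upwards [h1.eventually (gt_mem_nhds (show (1:ℝ) < 2 by norm_num))] with i hi
    have hx : ∀ x, |f x| ≤ ‖f‖ := fun x => f.norm_coe_le_norm x
    have h2 := hpos i (‖f‖ • 1 - f) (fun x => by simpa using (abs_le.1 (hx x)).2)
    have h3 := hpos i (‖f‖ • 1 + f) (fun x => by
      have := (abs_le.1 (hx x)).1
      simp; linarith)
    rw [map_sub, map_smul, smul_eq_mul] at h2
    rw [map_add, map_smul, smul_eq_mul] at h3
    have h4 : ‖f‖ * M i 1 ≤ ‖f‖ * 2 := by gcongr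
    constructor <;> linarith
  obtain ⟨Λ, hΛpos, hΛ⟩ := exists_limit_functional (U : Filter ι) M hpos (by
    intro f
    obtain ⟨a, -, ha⟩ := (isCompact_Icc (a := -(‖f‖ * 2)) (b := ‖f‖ * 2)).ultrafilter_le_nhds'
      (U.map fun i => M i f) (hb f)
    exact ⟨a, ha⟩)
  rw [← state_eq_integral φ hφ q hq hinv l μ hμ Λ hΛpos
    (fun h => tendsto_nhds_unique (hΛ _) (hql h))
    (fun f => by
      have := tendsto_nhds_unique ((hΛ (f.comp ⟨φ, hφ⟩)).sub (hΛ f)) (hM f)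
      linarith) f]
  exact hΛ f

theorem cesaro_shift_tendsto {X : Type*} [TopologicalSpace X] [CompactSpace X] (φ : X → X)
    (hφ : Continuous φ) (f : C(X, ℝ)) {ι : Type*} (F : Filter ι) (N : ι → ℕ)
    (hN : Tendsto N F atTop) (y : ι → X) :
    Tendsto (fun i => cesaro φ (N i) (y i) (f.comp ⟨φ, hφ⟩) - cesaro φ (N i) (y i) f) F
      (nhds 0) := by
  refine squeeze_zero_norm (fun i => cesaro_shift φ hφ (N i) (y i) f) ?_
  have := ((tendsto_inv_atTop_nhds_zero_nat (𝕜 := ℝ)).comp hN).mul_const (2 * ‖f‖)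
  simpa using this

/-- The hard direction for real functions. -/
theorem real_uniform {K L : Type*} [TopologicalSpace K] [CompactSpace K] [T2Space K]
    [TopologicalSpace L] [CompactSpace L] [T2Space L]
    (φ : K → K) (hφ : Continuous φ) (q : K → L) (hq : Continuous q)
    (hinv : ∀ x, q (φ x) = q x)
    (hue : ∀ l : L, UniquelyErgodic (fiberMap φ q hinv l)) (f : C(K, ℝ)) :
    ∃ g : K → ℝ, Tendsto (fun p : ℕ × K => cesaro φ p.1 p.2 f - g p.2)
      (atTop ×ˢ (⊤ : Filter K)) (nhds 0) := by
  let mS : ∀ l : L, MeasurableSpace ↥(q ⁻¹' {l}) := fun l => borel _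
  have bS : ∀ l : L, BorelSpace ↥(q ⁻¹' {l}) := fun l => ⟨rfl⟩
  have hcl : ∀ l, IsClosed (q ⁻¹' {l}) := fun l => isClosed_singleton.preimage hq
  have : ∀ l, CompactSpace ↥(q ⁻¹' {l}) :=
    fun l => isCompact_iff_compactSpace.1 (hcl l).isCompact
  choose μ hμ hμ' using hue
  beta_reduce at hμ hμ'
  have hμp : ∀ l, IsProbabilityMeasure (μ l) := fun l => (hμ l).1
  have hint : ∀ (l : L) (f : C(K, ℝ)), Integrable (fun x : ↥(q ⁻¹' {l}) => f x.1) (μ l) := by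
    intro l f
    exact (f.continuous.comp continuous_subtype_val).integrable_of_hasCompactSupport
      (HasCompactSupport.of_compactSpace _)
  let I : L → C(K, ℝ) →ₗ[ℝ] ℝ := fun l =>
    { toFun := fun f => ∫ x, f x.1 ∂(μ l)
      map_add' := fun f g => integral_add (hint l f) (hint l g)
      map_smul' := fun c f => integral_const_mul c _ }
  have hIf : ∀ l (f : C(K, ℝ)), I l f = ∫ x, f x.1 ∂(μ l) := fun _ _ => rfl
  refine ⟨fun x => I (q x) f, ?_⟩
  rw [tendsto_iff_ultrafilter]
  intro U hU
  have hN : Tendsto Prod.fst (U : Filter (ℕ × K)) atTop := tendsto_fst.mono_left hU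
  obtain ⟨l, -, hl⟩ := isCompact_univ.ultrafilter_le_nhds' (U.map fun p => q p.2) Filter.univ_mem
  have hl' : Tendsto (fun p : ℕ × K => q p.2) U (nhds l) := hl
  have h1 := tendsto_integral φ hφ q hq hinv l (μ l) (hμ' l) U
    (fun p => cesaro φ p.1 p.2) (fun p f hf => cesaro_nonneg φ _ _ f hf)
    (fun h => by
      refine ((h.continuous.tendsto l).comp hl').congr' ?_
      filter_upwards [hN.eventually (eventually_ne_atTop 0)] with p hp
      rw [cesaro_of_inv φ p.1 hp p.2 _ (fun x => by simp [hinv])]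
      rfl)
    (fun f => cesaro_shift_tendsto φ hφ f _ _ hN _) f
  have h2 := tendsto_integral φ hφ q hq hinv l (μ l) (hμ' l) U
    (fun p => I (q p.2)) (fun p f hf => integral_nonneg fun x => hf _)
    (fun h => by
      refine ((h.continuous.tendsto l).comp hl').congr' (Eventually.of_forall fun p => ?_)
      show h (q p.2) = ∫ x : ↥(q ⁻¹' {q p.2}), h (q x.1) ∂(μ (q p.2))
      have : ∀ x : ↥(q ⁻¹' {q p.2}), h (q x.1) = h (q p.2) := fun x => by
        rw [show q x.1 = q p.2 from x.2]
      simp [this])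
    (fun f => by
      have : ∀ l, I l (f.comp ⟨φ, hφ⟩) = I l f := by
        intro l
        rw [hIf, hIf]
        have hm := (hμ l).2.2
        conv_rhs => rw [← hm.map_eq]
        rw [integral_map (f := fun x : ↥(q ⁻¹' {l}) => f x.1) hm.measurable.aemeasurable
          (f.continuous.comp continuous_subtype_val).aestronglyMeasurable]
        rfl
      simp [this]) f
  simpa using h1.sub h2

theorem meanErgodic_of_real {K : Type*} [TopologicalSpace K] (φ : K → K)
    (h : ∀ f : C(K, ℝ), ∃ g : K → ℝ, Tendsto (fun p : ℕ × K => cesaro φ p.1 p.2 f - g p.2)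
      (atTop ×ˢ (⊤ : Filter K)) (nhds 0)) : MeanErgodic φ := by
  intro f
  obtain ⟨g1, hg1⟩ := h ⟨fun x => (f x).re, by fun_prop⟩
  obtain ⟨g2, hg2⟩ := h ⟨fun x => (f x).im, by fun_prop⟩
  refine ⟨fun x => (g1 x : ℂ) + g2 x * Complex.I, ?_⟩
  rw [tendstoUniformly_iff_tendstoUniformlyOnFilter, tendstoUniformlyOnFilter_iff_tendsto,
    Metric.uniformity_eq_comap_nhds_zero, tendsto_comap_iff]
  refine squeeze_zero (fun _ => dist_nonneg) (fun p => ?_) (by simpa using hg1.abs.add hg2.abs)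
  rw [Function.comp_apply, dist_comm, Complex.dist_eq]
  refine (Complex.norm_le_abs_re_add_abs_im _).trans (le_of_eq ?_)
  have e : ((p.1 : ℂ))⁻¹ = (((p.1 : ℝ)⁻¹ : ℝ) : ℂ) := by push_cast; rfl
  simp only [e, smul_eq_mul, Complex.sub_re, Complex.sub_im, Complex.re_ofReal_mul,
    Complex.im_ofReal_mul, Complex.re_sum, Complex.im_sum, cesaro_apply, ContinuousMap.coe_mk,
    Complex.add_re, Complex.add_im, Complex.ofReal_re, Complex.ofReal_im, Complex.I_re,
    Complex.I_im, mul_zero, mul_one, add_zero, zero_add]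

/-- The easy direction on a single system. -/
theorem uniquelyErgodic_of_tendsto {S : Type*} [TopologicalSpace S] [CompactSpace S] [T2Space S]
    [Nonempty S] (ψ : S → S) (hψ : Continuous ψ)
    (h : ∀ f : C(S, ℝ), ∃ c : ℝ, ∀ x, Tendsto (fun n => cesaro ψ n x f) atTop (nhds c)) :
    UniquelyErgodic ψ := by
  let : MeasurableSpace S := borel S
  have : BorelSpace S := ⟨rfl⟩
  obtain ⟨x₀⟩ := ‹Nonempty S›
  obtain ⟨Λ, hpos, hΛ⟩ := exists_limit_functional (atTop : Filter ℕ) (fun n => cesaro ψ n x₀)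
    (fun n f hf => cesaro_nonneg ψ n x₀ f hf) (fun f => (h f).imp fun c hc => hc x₀)
  have hlim : ∀ f x, Tendsto (fun n => cesaro ψ n x f) atTop (nhds (Λ f)) := by
    intro f x
    obtain ⟨c, hc⟩ := h f
    rw [tendsto_nhds_unique (hΛ f) (hc x₀)]
    exact hc x
  obtain ⟨μ, hμ, -⟩ := exists_inv_measure ψ hψ Λ hpos
    (by
      refine tendsto_nhds_unique (hΛ 1) (tendsto_const_nhds.congr' ?_)
      filter_upwards [eventually_ne_atTop 0] with n hn
      rw [cesaro_of_inv ψ n hn x₀ 1 (fun _ => rfl)]; rfl)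
    (fun f => by
      have := tendsto_nhds_unique ((hΛ (f.comp ⟨ψ, hψ⟩)).sub (hΛ f))
        (cesaro_shift_tendsto ψ hψ f atTop id tendsto_id fun _ => x₀)
      linarith)
  have key : ∀ ν : Measure S, (IsProbabilityMeasure ν ∧ ν.Regular ∧ MeasurePreserving ψ ν ν) →
      ∀ f : C(S, ℝ), ∫ x, f x ∂ν = Λ f := by
    rintro ν ⟨hp, hr, hm⟩ f
    have hcont : ∀ k, Continuous fun x => f (ψ^[k] x) := fun k =>
      f.continuous.comp (hψ.iterate k)
    have hi : ∀ k, Integrable (fun x => f (ψ^[k] x)) ν := fun k =>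
      (hcont k).integrable_of_hasCompactSupport (HasCompactSupport.of_compactSpace _)
    have hk : ∀ k, ∫ x, f (ψ^[k] x) ∂ν = ∫ x, f x ∂ν := by
      intro k
      have hmk := hm.iterate k
      conv_rhs => rw [← hmk.map_eq]
      rw [integral_map hmk.measurable.aemeasurable f.continuous.aestronglyMeasurable]
    have hA : ∀ n : ℕ, n ≠ 0 → ∫ x, cesaro ψ n x f ∂ν = ∫ x, f x ∂ν := by
      intro n hn
      simp only [cesaro_apply]
      rw [integral_const_mul, integral_finsetSum _ (fun k _ => hi k)]
      simp only [hk, Finset.sum_const, Finset.card_range, nsmul_eq_mul]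
      field_simp
    have hdom : Tendsto (fun n : ℕ => ∫ x, cesaro ψ n x f ∂ν) atTop (nhds (∫ _, Λ f ∂ν)) := by
      refine tendsto_integral_of_dominated_convergence (fun _ => ‖f‖) ?_ (integrable_const _) ?_ ?_
      · intro n
        simp only [cesaro_apply]
        exact (continuous_const.mul
          (continuous_finsetSum _ fun k _ => hcont k)).aestronglyMeasurable
      · intro n
        refine Eventually.of_forall fun x => ?_
        rw [cesaro_apply, norm_mul, norm_inv, Real.norm_natCast]
        have : ‖∑ k ∈ Finset.range n, f (ψ^[k] x)‖ ≤ n * ‖f‖ := by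
          refine (norm_sum_le_of_le _ fun k _ => f.norm_coe_le_norm _).trans (le_of_eq ?_)
          simp
        calc (n : ℝ)⁻¹ * ‖∑ k ∈ Finset.range n, f (ψ^[k] x)‖ ≤ (n : ℝ)⁻¹ * (n * ‖f‖) := by gcongr
          _ ≤ 1 * ‖f‖ := by
            rw [← mul_assoc]
            gcongr
            exact inv_mul_le_one
          _ = ‖f‖ := one_mul _
      · exact Eventually.of_forall fun x => hlim f x
    have h1 : Tendsto (fun n : ℕ => ∫ x, cesaro ψ n x f ∂ν) atTop (nhds (∫ x, f x ∂ν)) := by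
      refine tendsto_const_nhds.congr' ?_
      filter_upwards [eventually_ne_atTop 0] with n hn
      exact (hA n hn).symm
    rw [tendsto_nhds_unique h1 hdom]
    simp
  refine ⟨μ, hμ, fun ν hν => ?_⟩
  have := hμ.2.1
  have := hν.2.1
  exact measure_eq_of_integral ν μ fun f => by rw [key ν hν, key μ hμ]

theorem fiber_tendsto {K L : Type*} [TopologicalSpace K] [CompactSpace K] [T2Space K]
    [TopologicalSpace L] [CompactSpace L] [T2Space L]
    (φ : K → K) (hφ : Continuous φ)
    (q : K → L) (hq : Continuous q)
    (hinv : ∀ x, q (φ x) = q x)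
    (hmax : ∀ f : C(K, ℂ), (∀ x, f (φ x) = f x) ↔ ∃ g : C(L, ℂ), f = g.comp ⟨q, hq⟩)
    (hme : MeanErgodic φ) (l : L) (f : C(↥(q ⁻¹' {l}), ℝ)) :
    ∃ c : ℝ, ∀ x, Tendsto (fun n => cesaro (fiberMap φ q hinv l) n x f) atTop (nhds c) := by
  have hcl : IsClosed (q ⁻¹' {l}) := isClosed_singleton.preimage hq
  obtain ⟨F, -, hF⟩ := ContinuousMap.exists_restrict_eq_forall_mem_of_closed f
    (t := Set.univ) (fun _ => trivial) Set.univ_nonempty hcl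
  have hF' : ∀ x : ↥(q ⁻¹' {l}), F x = f x :=
    fun x => congrArg (fun u : C(↥(q ⁻¹' {l}), ℝ) => u x) hF
  obtain ⟨g, hg⟩ := hme ⟨fun x => (F x : ℂ), by fun_prop⟩
  simp only [ContinuousMap.coe_mk] at hg
  have hces : ∀ (n : ℕ) (x : K), ((n : ℂ)⁻¹ • ∑ k ∈ Finset.range n, (F (φ^[k] x) : ℂ))
      = ((cesaro φ n x F : ℝ) : ℂ) := by
    intro n x
    rw [cesaro_apply]; push_cast; rfl
  simp only [hces] at hg
  have hgc : Continuous g := hg.continuous (Frequently.of_forall fun n => by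
    simp only [cesaro_apply]
    have : ∀ k, Continuous fun x => F (φ^[k] x) := fun k => F.continuous.comp (hφ.iterate k)
    fun_prop)
  have hpt : ∀ x, Tendsto (fun n => ((cesaro φ n x F : ℝ) : ℂ)) atTop (nhds (g x)) :=
    fun x => hg.tendsto_at x
  have hre : ∀ x, Tendsto (fun n => cesaro φ n x F) atTop (nhds (g x).re) := fun x => by
    exact (Complex.continuous_re.tendsto _).comp (hpt x)
  have hginv : ∀ x, g (φ x) = g x := by
    intro x
    have h1 : Tendsto (fun n => ((cesaro φ n x (F.comp ⟨φ, hφ⟩) - cesaro φ n x F : ℝ) : ℂ))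
        atTop (nhds 0) := by
      have := cesaro_shift_tendsto φ hφ F atTop id tendsto_id fun _ => x
      simpa [Function.comp_def] using (Complex.continuous_ofReal.tendsto _).comp this
    have e : ∀ n, cesaro φ n x (F.comp ⟨φ, hφ⟩) = cesaro φ n (φ x) F := by
      intro n
      simp only [cesaro_apply, ContinuousMap.comp_apply, ContinuousMap.coe_mk,
        ← Function.iterate_succ_apply', Function.iterate_succ_apply]
    simp only [e, Complex.ofReal_sub] at h1
    have := tendsto_nhds_unique h1 ((hpt (φ x)).sub (hpt x))
    exact (sub_eq_zero.1 this.symm)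
  obtain ⟨h, hh⟩ := (hmax ⟨g, hgc⟩).1 hginv
  refine ⟨(h l).re, fun x => ?_⟩
  have hgx : g x.1 = h l := by
    have := congrArg (fun u : C(K, ℂ) => u x.1) hh
    simp only [ContinuousMap.coe_mk, ContinuousMap.comp_apply] at this
    rw [this, show q x.1 = l from x.2]
  rw [← hgx]
  refine (hre x.1).congr fun n => ?_
  have hit : ∀ k, (((fiberMap φ q hinv l)^[k] x : ↥(q ⁻¹' {l})) : K) = φ^[k] x.1 := by
    intro k
    induction k with
    | zero => rfl
    | succ k ih => rw [Function.iterate_succ_apply', Function.iterate_succ_apply', ← ih]; rfl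
  simp only [cesaro_apply, ← hF', hit]


/-- Let `(K, φ)` be a topological dynamical system and `q : K → L` a
projection onto its maximal trivial factor.  Then the Koopman operator `T_φ` is mean ergodic
on `C(K)` if and only if every fiber system `(K_l, φ_l)` is uniquely ergodic. -/
theorem meanErgodic_iff_fibers_uniquelyErgodic
    {K L : Type*} [TopologicalSpace K] [CompactSpace K] [T2Space K]
    [TopologicalSpace L] [CompactSpace L] [T2Space L]
    (φ : K → K) (hφ : Continuous φ)
    (q : K → L) (hq : Continuous q) (hqsurj : Function.Surjective q)
    (hinv : ∀ x, q (φ x) = q x)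
    (hmax : ∀ f : C(K, ℂ), (∀ x, f (φ x) = f x) ↔ ∃ g : C(L, ℂ), f = g.comp ⟨q, hq⟩) :
    MeanErgodic φ ↔ ∀ l : L, UniquelyErgodic (fiberMap φ q hinv l) := by
  constructor
  · intro hme l
    have hcl : IsClosed (q ⁻¹' {l}) := isClosed_singleton.preimage hq
    have : CompactSpace ↥(q ⁻¹' {l}) := isCompact_iff_compactSpace.1 hcl.isCompact
    have : Nonempty ↥(q ⁻¹' {l}) := by
      obtain ⟨x, hx⟩ := hqsurj l
      exact ⟨⟨x, hx⟩⟩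
    have hψ : Continuous (fiberMap φ q hinv l) :=
      (hφ.comp continuous_subtype_val).subtype_mk _
    exact uniquelyErgodic_of_tendsto _ hψ (fiber_tendsto φ hφ q hq hinv hmax hme l)
  · intro hue
    exact meanErgodic_of_real φ (real_uniform φ hφ q hq hinv hue)
end

section
/- Let (K, B, p; φ) be a bundle of topological dynamical systems such that every fiber system (K_b, φ_b) is uniquely ergodic, and for each b ∈ B let μ_b denote the unique φ_b-invariant regular Borel probability measure on K_b, regarded as a measure on K supported on K_b. Then the map B → M(K), b ↦ μ_b, is continuous with respect to the weak* topology on the space M(K) of regular Borel measures on K (identified with the dual of C(K)). -/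
open MeasureTheory

open Filter Topology

theorem aux_limit_measure {K B : Type*} [TopologicalSpace K] [CompactSpace K] [T2Space K]
    [MeasurableSpace K] [BorelSpace K] (U : Ultrafilter B)
    (μ : B → Measure K) (hμprob : ∀ b, IsProbabilityMeasure (μ b)) :
    ∃ ν : Measure K, IsProbabilityMeasure ν ∧ ν.Regular ∧
      ∀ f : C(K, ℝ), Tendsto (fun b => ∫ x, f x ∂(μ b)) U (𝓝 (∫ x, f x ∂ν)) := by
  have hint : ∀ (f : C(K, ℝ)) b, Integrable (fun x => f x) (μ b) := fun f b =>
    f.continuous.integrable_of_hasCompactSupport (HasCompactSupport.of_compactSpace _)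
  have hex : ∀ f : C(K, ℝ), ∃ a : ℝ, Tendsto (fun b => ∫ x, f x ∂(μ b)) U (𝓝 a) := by
    intro f
    have hb : ∀ b, ∫ x, f x ∂(μ b) ∈ Metric.closedBall (0 : ℝ) ‖f‖ := by
      intro b
      rw [mem_closedBall_zero_iff]
      have := norm_integral_le_of_norm_le_const (μ := μ b) (f := fun x => f x) (C := ‖f‖)
        (Eventually.of_forall fun x => f.norm_coe_le_norm x)
      simpa using this
    have hc := isCompact_closedBall (0 : ℝ) ‖f‖
    obtain ⟨a, -, ha⟩ := hc.ultrafilter_le_nhds (U.map fun b => ∫ x, f x ∂(μ b))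
      (by
        rw [le_principal_iff]
        exact Filter.mem_map.2 (Filter.univ_mem' hb))
    exact ⟨a, ha⟩
  choose L hL using hex
  have uniq : ∀ (f : C(K, ℝ)) a, Tendsto (fun b => ∫ x, f x ∂(μ b)) U (𝓝 a) → L f = a :=
    fun f a h => tendsto_nhds_unique (hL f) h
  let Λ : CompactlySupportedContinuousMap K ℝ →ₚ[ℝ] ℝ := PositiveLinearMap.mk₀
    { toFun := fun f => L (f : C(K, ℝ))
      map_add' := by
        intro f g
        apply uniq
        refine ((hL f).add (hL g)).congr fun b => ?_
        exact (integral_add (hint f b) (hint g b)).symm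
      map_smul' := by
        intro c f
        apply uniq
        refine ((hL f).const_mul c).congr fun b => ?_
        exact (integral_const_mul c _).symm }
    (by
      intro f hf
      exact ge_of_tendsto' (hL f) fun b => integral_nonneg fun x => hf x)
  have hΛ : ∀ f : C(K, ℝ), ∫ x, f x ∂(RealRMK.rieszMeasure Λ) = L f := fun f =>
    RealRMK.integral_rieszMeasure Λ (CompactlySupportedContinuousMap.continuousMapEquiv f)
  refine ⟨RealRMK.rieszMeasure Λ, ⟨?_⟩, inferInstance, fun f => by rw [hΛ]; exact hL f⟩
  have h1 := hΛ 1
  rw [uniq 1 1 (by simp)] at h1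
  have h2 : (RealRMK.rieszMeasure Λ).real Set.univ = 1 := by simpa using h1
  rw [Measure.real, ENNReal.toReal_eq_one_iff] at h2
  exact h2

theorem aux_real
    {K B : Type*} [TopologicalSpace K] [CompactSpace K] [T2Space K]
    [MeasurableSpace K] [BorelSpace K]
    [TopologicalSpace B] [CompactSpace B] [T2Space B]
    (φ : K → K) (hφ : Continuous φ)
    (p : K → B) (hp : Continuous p)
    (μ : B → Measure K)
    (hμprob : ∀ b, IsProbabilityMeasure (μ b))
    (hμsupp : ∀ b, μ b ((p ⁻¹' {b})ᶜ) = 0)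
    (hμinv : ∀ b, (μ b).map φ = μ b)
    (hμuniq : ∀ b (ν : Measure K), IsProbabilityMeasure ν → ν.Regular →
      ν ((p ⁻¹' {b})ᶜ) = 0 → ν.map φ = ν → ν = μ b) (f : C(K, ℝ)) :
    Continuous fun b : B => ∫ x, f x ∂(μ b) := by
  rw [continuous_iff_continuousAt]
  intro b
  rw [ContinuousAt, tendsto_iff_ultrafilter]
  intro U hU
  obtain ⟨ν, hν, hreg, hlim⟩ := aux_limit_measure U μ hμprob
  have key : ν = μ b := by
    apply hμuniq b ν hν hreg
    · have hopen : IsOpen ((p ⁻¹' {b})ᶜ) := (isClosed_singleton.preimage hp).isOpen_compl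
      by_contra hne
      obtain ⟨C, hCsub, hC, hCpos⟩ := hopen.exists_lt_isCompact (pos_iff_ne_zero.2 hne)
      have hdisj : Disjoint ({b} : Set B) (p '' C) := by
        rw [Set.disjoint_singleton_left]
        rintro ⟨x, hx, rfl⟩
        exact hCsub hx rfl
      obtain ⟨g, hg0, hg1, hg⟩ := exists_continuous_zero_one_of_isClosed
        (isClosed_singleton (x := b)) (hC.image hp).isClosed hdisj
      have e : ∀ b', ∫ x, (g.comp ⟨p, hp⟩) x ∂(μ b') = g b' := by
        intro b'
        have : (fun x => (g.comp ⟨p, hp⟩) x) =ᵐ[μ b'] fun _ => g b' := by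
          refine measure_mono_null ?_ (hμsupp b')
          intro x hx hx'
          apply hx
          have : p x = b' := hx'
          simp [this]
        rw [integral_congr_ae this]
        simp
      have h1 := hlim (g.comp ⟨p, hp⟩)
      simp only [e] at h1
      have h2 : Tendsto g U (𝓝 (g b)) := (g.continuous.tendsto b).mono_left hU
      have h3 := tendsto_nhds_unique h1 h2
      rw [hg0 rfl] at h3
      have hi : Integrable (fun x => (g.comp ⟨p, hp⟩) x) ν :=
        (g.comp ⟨p, hp⟩).continuous.integrable_of_hasCompactSupport
          (HasCompactSupport.of_compactSpace _)
      have h4 := (integral_eq_zero_iff_of_nonneg (fun x => (hg (p x)).1) hi).1 h3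
      have h5 : ν C = 0 := by
        refine measure_mono_null ?_ h4
        intro x hx hx'
        have a1 : g (p x) = 1 := hg1 ⟨x, hx, rfl⟩
        have a2 : g (p x) = 0 := hx'
        rw [a1] at a2
        exact one_ne_zero a2
      exact hCpos.ne' h5
    · have : IsProbabilityMeasure (ν.map φ) :=
        Measure.isProbabilityMeasure_map hφ.measurable.aemeasurable
      have : (ν.map φ).InnerRegularCompactLTTop :=
        Measure.InnerRegularCompactLTTop.map_of_continuous hφ
      have : (ν.map φ).Regular := inferInstance
      apply Measure.ext_of_integral_eq_on_compactlySupported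
      intro h
      have im : ∀ m : Measure K, ∫ x, h x ∂(m.map φ) = ∫ x, h (φ x) ∂m := fun m =>
        integral_map hφ.measurable.aemeasurable h.continuous.measurable.aestronglyMeasurable
      rw [im]
      have h1 := hlim ((h : C(K, ℝ)).comp ⟨φ, hφ⟩)
      have h2 := hlim (h : C(K, ℝ))
      refine tendsto_nhds_unique h1 (h2.congr fun b' => ?_)
      have := im (μ b')
      rw [hμinv] at this
      exact this
  rw [← key]
  exact hlim f

/-- Let `(K, B, p; φ)` be a bundle of topological dynamical systems such
that every fiber system `(K_b, φ_b)` is uniquely ergodic, and for `b ∈ B` let `μ b` denote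
the unique `φ`-invariant regular Borel probability measure on `K` supported on the fiber
`K_b = p⁻¹ {b}`.  Then `b ↦ μ b` is continuous with respect to the weak* topology on `M(K)`,
i.e. for every `f ∈ C(K)` the map `b ↦ ∫ f dμ_b` is continuous. -/
theorem fiber_measures_weakStar_continuous
    {K B : Type*} [TopologicalSpace K] [CompactSpace K] [T2Space K]
    [MeasurableSpace K] [BorelSpace K]
    [TopologicalSpace B] [CompactSpace B] [T2Space B]
    (φ : K → K) (hφ : Continuous φ)
    (p : K → B) (hp : Continuous p) (hpsurj : Function.Surjective p)
    (hinv : ∀ x, p (φ x) = p x)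
    (μ : B → Measure K)
    (hμprob : ∀ b, IsProbabilityMeasure (μ b))
    (hμreg : ∀ b, (μ b).Regular)
    (hμsupp : ∀ b, μ b ((p ⁻¹' {b})ᶜ) = 0)
    (hμinv : ∀ b, (μ b).map φ = μ b)
    (hμuniq : ∀ b (ν : Measure K), IsProbabilityMeasure ν → ν.Regular →
      ν ((p ⁻¹' {b})ᶜ) = 0 → ν.map φ = ν → ν = μ b) :
    ∀ f : C(K, ℂ), Continuous fun b : B => ∫ x, f x ∂(μ b) := by
  intro f
  have hre := aux_real φ hφ p hp μ hμprob hμsupp hμinv hμuniq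
    ⟨fun x => (f x).re, Complex.continuous_re.comp f.continuous⟩
  have him := aux_real φ hφ p hp μ hμprob hμsupp hμinv hμuniq
    ⟨fun x => (f x).im, Complex.continuous_im.comp f.continuous⟩
  have hi : ∀ b, Integrable (fun x => f x) (μ b) := fun b =>
    f.continuous.integrable_of_hasCompactSupport (HasCompactSupport.of_compactSpace _)
  have e : (fun b : B => ∫ x, f x ∂(μ b)) = fun b =>
      ((∫ x, (f x).re ∂(μ b) : ℝ) : ℂ) + ((∫ x, (f x).im ∂(μ b) : ℝ) : ℂ) * Complex.I := by
    funext b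
    exact (integral_re_add_im (hi b)).symm
  rw [e]
  exact (Complex.continuous_ofReal.comp hre).add
    ((Complex.continuous_ofReal.comp him).mul continuous_const)
end

section
/- Let (K, φ) be a topological dynamical system. Then the Koopman operator T_φ has discrete spectrum on C(K) if and only if φ is a bijection (hence a homeomorphism) and the family {φ^n : n ∈ ℕ} is uniformly equicontinuous with respect to the unique uniformity of K. -/
/-- A topological dynamical system has discrete spectrum if the linear span of the
eigenvectors of its Koopman operator with unimodular eigenvalues is dense in `C(K)`. -/
def DiscreteSpectrum {K : Type*} [TopologicalSpace K] (φ : K → K) : Prop :=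
  Dense (↑(Submodule.span ℂ
    {f : C(K, ℂ) | f ≠ 0 ∧ ∃ lam : ℂ, ‖lam‖ = 1 ∧ ∀ x, f (φ x) = lam * f x}) :
      Set C(K, ℂ))


section Aux
open Finset

lemma aux_orth (q : ℕ) (hq : 0 < q) : ∃ z : ℂ, ‖z‖ = 1 ∧ ∀ m n, m < q → n < q →
    ∑ j ∈ range q, (z ^ j) ^ m * star ((z ^ j) ^ n) = if m = n then (q : ℂ) else 0 := by
  have hp := Complex.isPrimitiveRoot_exp q hq.ne'
  set z := Complex.exp (2 * Real.pi * Complex.I / q) with hz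
  have hn : ‖z‖ = 1 := Complex.norm_eq_one_of_pow_eq_one hp.pow_eq_one hq.ne'
  have hzz : z * star z = 1 := by
    have := Complex.mul_conj z
    rw [Complex.normSq_eq_norm_sq, hn] at this
    simpa using this
  refine ⟨z, hn, fun m n hm hn' => ?_⟩
  have e : ∀ j, (z ^ j) ^ m * star ((z ^ j) ^ n) = (z ^ m * star z ^ n) ^ j := by
    intro j
    rw [star_pow, star_pow, mul_pow]; ring
  simp_rw [e]
  split_ifs with h
  · subst h
    rw [← mul_pow, hzz]; simp
  · set r := z ^ m * star z ^ n with hr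
    have hr1 : r ≠ 1 := by
      intro h1
      apply h
      apply hp.pow_inj hm hn'
      have : z ^ m * (z * star z) ^ n = z ^ n := by
        rw [mul_pow, mul_left_comm, ← hr, h1, mul_one]
      rwa [hzz, one_pow, mul_one] at this
    have hrq : r ^ q = 1 := by
      have h2 : z ^ q = 1 := hp.pow_eq_one
      have h3 : star z ^ q = 1 := by rw [← star_pow, h2, star_one]
      rw [hr, mul_pow, ← pow_mul, ← pow_mul, mul_comm m, mul_comm n, pow_mul, pow_mul, h2, h3]; simp
    have := geom_sum_mul r q
    rw [hrq, sub_self] at this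
    exact (mul_eq_zero.1 this).resolve_right (sub_ne_zero.2 hr1)

lemma aux_fourier (p : ℕ) (hp : 0 < p) (a b : ℕ → ℝ) (ha0 : ∀ m, 0 ≤ a m) (ha1 : ∀ m, a m ≤ 1)
    (c : ℝ) (hc : 0 < c)
    (h : c * (p : ℝ) ^ 2 ≤ ∑ m ∈ range p, ∑ l ∈ range p, a m * a l * b (m + l)) :
    ∃ lam : ℂ, ‖lam‖ = 1 ∧ c * p / 2 ≤ ‖∑ m ∈ range (2 * p), lam ^ m * (b m : ℂ)‖ := by
  obtain ⟨z, hz, horth⟩ := aux_orth (2 * p) (by omega)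
  by_contra! hcon
  have hpR : (0 : ℝ) < p := by exact_mod_cast hp
  let α : ℕ → ℂ := fun j => ∑ m ∈ range p, (a m : ℂ) * (z ^ j) ^ m
  let β : ℕ → ℂ := fun j => ∑ m ∈ range (2 * p), (z ^ j) ^ m * (b m : ℂ)
  have hβ : ∀ j, ‖β j‖ ≤ c * p / 2 := fun j => (hcon (z ^ j) (by simp [hz])).le
  have hα : ∑ j ∈ range (2 * p), α j * star (α j) = ((2 * p : ℕ) : ℂ) * ∑ m ∈ range p, (a m : ℂ) ^ 2 := by
    have : ∀ j, α j * star (α j) = ∑ m ∈ range p, ∑ l ∈ range p,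
        (a m : ℂ) * (a l : ℂ) * ((z ^ j) ^ m * star ((z ^ j) ^ l)) := by
      intro j
      simp only [α]
      rw [star_sum, sum_mul_sum]
      refine sum_congr rfl fun m _ => sum_congr rfl fun l _ => ?_
      rw [star_mul']
      simp only [Complex.star_def, Complex.conj_ofReal]
      ring
    simp_rw [this]
    rw [sum_comm, mul_sum]
    refine sum_congr rfl fun m hm => ?_
    rw [sum_comm]
    simp_rw [← mul_sum]
    rw [sum_eq_single m]
    · rw [horth m m (by have := mem_range.1 hm; omega) (by have := mem_range.1 hm; omega), if_pos rfl]
      ring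
    · intro l hl hlm
      rw [horth m l (by have := mem_range.1 hm; omega) (by have := mem_range.1 hl; omega), if_neg hlm.symm]
      ring
    · intro h; exact absurd hm h
  have hαn : ∑ j ∈ range (2 * p), ‖α j‖ ^ 2 ≤ 2 * p * p := by
    have h1 : ((∑ j ∈ range (2 * p), ‖α j‖ ^ 2 : ℝ) : ℂ) = ((2 * p * ∑ m ∈ range p, a m ^ 2 : ℝ) : ℂ) := by
      push_cast at hα ⊢
      rw [← hα]
      refine sum_congr rfl fun j _ => ?_
      have := Complex.mul_conj (α j)
      rw [Complex.normSq_eq_norm_sq] at this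
      rw [Complex.star_def, this]; push_cast; rfl
    have h2 := Complex.ofReal_injective h1
    rw [h2]
    have h3 : ∑ m ∈ range p, a m ^ 2 ≤ ∑ m ∈ range p, (1 : ℝ) :=
      sum_le_sum fun m _ => pow_le_one₀ (ha0 m) (ha1 m)
    simp only [sum_const, card_range, nsmul_eq_mul, mul_one] at h3
    gcongr
  have hS : ∑ j ∈ range (2 * p), star (α j) ^ 2 * β j =
      (((2 * p : ℕ) * ∑ m ∈ range p, ∑ l ∈ range p, a m * a l * b (m + l) : ℝ) : ℂ) := by
    have : ∀ j, star (α j) ^ 2 * β j = ∑ m ∈ range p, ∑ l ∈ range p, ∑ n ∈ range (2 * p),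
        (a m : ℂ) * (a l : ℂ) * (b n) * ((z ^ j) ^ n * star ((z ^ j) ^ (m + l))) := by
      intro j
      simp only [α, β]
      rw [star_sum, sq, sum_mul_sum, sum_mul]
      refine sum_congr rfl fun m _ => ?_
      rw [sum_mul]
      refine sum_congr rfl fun l _ => ?_
      rw [mul_sum]
      refine sum_congr rfl fun n _ => ?_
      rw [star_mul', star_mul', pow_add, star_mul']
      simp only [Complex.star_def, Complex.conj_ofReal]
      ring
    simp_rw [this]
    rw [sum_comm]
    push_cast
    rw [mul_sum]
    refine sum_congr rfl fun m hm => ?_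
    rw [sum_comm, mul_sum]
    refine sum_congr rfl fun l hl => ?_
    rw [sum_comm]
    simp_rw [← mul_sum]
    have hm := mem_range.1 hm
    have hl := mem_range.1 hl
    rw [sum_eq_single (m + l)]
    · rw [horth _ _ (by omega) (by omega), if_pos rfl]
      push_cast
      ring
    · intro n hn hlm
      rw [horth _ _ (by have := mem_range.1 hn; omega) (by omega), if_neg hlm]
      ring
    · intro h; exact absurd (mem_range.2 (by omega)) h
  have h1 : ‖∑ j ∈ range (2 * p), star (α j) ^ 2 * β j‖ ≤ (2 * p * p) * (c * p / 2) := by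
    calc _ ≤ ∑ j ∈ range (2 * p), ‖star (α j) ^ 2 * β j‖ := norm_sum_le _ _
      _ ≤ ∑ j ∈ range (2 * p), ‖α j‖ ^ 2 * (c * p / 2) := by
        refine sum_le_sum fun j _ => ?_
        rw [norm_mul, norm_pow, norm_star]
        gcongr
        exact hβ j
      _ ≤ _ := by rw [← sum_mul]; gcongr
  rw [hS, Complex.norm_real] at h1
  have h2 := (le_abs_self _).trans h1
  push_cast at h2
  have h3 : 2 * (p : ℝ) * (c * p ^ 2) ≤ 2 * p * p * (c * p / 2) := le_trans (by gcongr) h2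
  have : 0 < c * (p : ℝ) ^ 3 := by positivity
  nlinarith

lemma aux_iso {K M : Type*} [TopologicalSpace K] [CompactSpace K] [MetricSpace M] (ι : K → M)
    (hι : Continuous ι) (φ : K → K) (hs : Function.Surjective φ)
    (hne : ∀ x y, dist (ι (φ x)) (ι (φ y)) ≤ dist (ι x) (ι y)) (a b : K) :
    dist (ι (φ a)) (ι (φ b)) = dist (ι a) (ι b) := by
  refine le_antisymm (hne a b) (le_of_forall_pos_le_add fun ε hε => ?_)
  obtain ⟨g, hg⟩ := hs.hasRightInverse
  have hit : ∀ n x y, dist (ι (φ^[n] x)) (ι (φ^[n] y)) ≤ dist (ι x) (ι y) := by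
    intro n
    induction n with
    | zero => intro x y; exact le_rfl
    | succ n ih =>
      intro x y
      rw [Function.iterate_succ_apply, Function.iterate_succ_apply]
      exact (ih _ _).trans (hne _ _)
  have hgi : ∀ n, Function.LeftInverse φ^[n] g^[n] := fun n => Function.LeftInverse.iterate hg n
  have hc : IsCompact (Set.range (fun x : K × K => (ι x.1, ι x.2))) := isCompact_range (by fun_prop)
  obtain ⟨l, -, s, hsm, hl⟩ := hc.tendsto_subseq (x := fun n => (ι (g^[n] a), ι (g^[n] b)))
    (fun n => ⟨(g^[n] a, g^[n] b), rfl⟩)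
  obtain ⟨N, hN⟩ := Metric.cauchySeq_iff.1 hl.cauchySeq (ε / 2) (by positivity)
  have h1 := hN N le_rfl (N + 1) (by omega)
  have hlt : s N < s (N + 1) := hsm (by omega)
  obtain ⟨k, hk⟩ := Nat.exists_eq_add_of_lt hlt
  simp only [Function.comp, Prod.dist_eq, max_lt_iff] at h1
  rw [hk] at h1
  have key : ∀ c, dist (ι (g^[s N] c)) (ι (g^[s N + k + 1] c)) < ε / 2 →
      dist (ι (φ c)) (ι (g^[k] c)) < ε / 2 := by
    intro c hcl
    refine lt_of_le_of_lt ?_ hcl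
    have h2 := hit (s N + 1) (g^[s N] c) (g^[s N + k + 1] c)
    have e1 : φ^[s N + 1] (g^[s N] c) = φ c := by
      rw [Function.iterate_succ_apply', hgi]
    have e2 : φ^[s N + 1] (g^[s N + k + 1] c) = g^[k] c := by
      rw [show s N + k + 1 = (s N + 1) + k by ring, Function.iterate_add_apply g, hgi]
    rwa [e1, e2] at h2
  have ka := key a h1.1
  have kb := key b h1.2
  have hab : dist (ι a) (ι b) ≤ dist (ι (g^[k] a)) (ι (g^[k] b)) := by
    have := hit k (g^[k] a) (g^[k] b)
    rwa [hgi, hgi] at this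
  have t1 := dist_triangle4 (ι (g^[k] a)) (ι (φ a)) (ι (φ b)) (ι (g^[k] b))
  rw [dist_comm (ι (g^[k] a)) (ι (φ a))] at t1
  linarith

lemma aux_dens {K M : Type*} [TopologicalSpace K] [CompactSpace K] [MetricSpace M] (ι : K → M)
    (hι : Continuous ι) (φ : K → K)
    (hiso : ∀ n x y, dist (ι (φ^[n] x)) (ι (φ^[n] y)) = dist (ι x) (ι y)) (x0 : K) :
    ∃ C : ℕ, 0 < C ∧ ∀ p : ℕ,
      p ≤ C * ((range p).filter (fun m => dist (ι (φ^[m] x0)) (ι x0) < 1 / 4)).card := by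
  classical
  obtain ⟨t, -, htf, htc⟩ := finite_cover_balls_of_compact (isCompact_range hι) (e := 1 / 8) (by norm_num)
  have : ∀ x, ∃ y ∈ htf.toFinset, dist (ι x) y < 1 / 8 := by
    intro x
    have := htc ⟨x, rfl⟩
    simp only [Set.mem_iUnion, Metric.mem_ball] at this
    obtain ⟨y, hy, h⟩ := this
    exact ⟨y, by simpa using hy, h⟩
  choose F hF hFd using this
  refine ⟨htf.toFinset.card, Finset.card_pos.2 ⟨_, hF x0⟩, fun p => ?_⟩
  set R := (range p).filter (fun m => dist (ι (φ^[m] x0)) (ι x0) < 1 / 4) with hR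
  have hfib : ∀ y ∈ htf.toFinset, ((range p).filter (fun m => F (φ^[m] x0) = y)).card ≤ R.card := by
    intro y _
    set S := (range p).filter (fun m => F (φ^[m] x0) = y) with hS
    rcases S.eq_empty_or_nonempty with he | hne
    · simp [he]
    set i := S.min' hne
    have hi : i ∈ S := S.min'_mem hne
    refine Finset.card_le_card_of_injOn (fun m => m - i) ?_ ?_
    · intro m hm
      have hle : i ≤ m := S.min'_le m hm
      have hm' := (mem_filter.1 hm)
      have hi' := (mem_filter.1 hi)
      simp only [hR, coe_filter, Set.mem_ofPred_eq]
      refine ⟨by have := mem_range.1 hm'.1; exact mem_range.2 (by omega), ?_⟩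
      rw [← hiso i, ← Function.iterate_add_apply, Nat.add_sub_cancel' hle]
      have h1 := hFd (φ^[m] x0)
      have h2 := hFd (φ^[i] x0)
      rw [hm'.2] at h1
      rw [hi'.2] at h2
      have := dist_triangle_right (ι (φ^[m] x0)) (ι (φ^[i] x0)) y
      linarith
    · intro m hm n hn h
      have h1 : i ≤ m := S.min'_le m hm
      have h2 : i ≤ n := S.min'_le n hn
      simp only at h
      omega
  have := Finset.card_eq_sum_card_fiberwise (s := range p) (t := htf.toFinset)
    (f := fun m => F (φ^[m] x0)) (fun m _ => hF _)
  rw [card_range] at this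
  calc p = _ := this
    _ ≤ _ := Finset.sum_le_card_nsmul _ _ _ hfib

lemma aux_sep {K M : Type*} [TopologicalSpace K] [CompactSpace K] [MetricSpace M] (ι : K → M)
    (hι : Continuous ι) (φ : K → K)
    (hiso1 : ∀ x y, dist (ι (φ x)) (ι (φ y)) = dist (ι x) (ι y)) (x0 y0 : K)
    (h3 : 3 ≤ dist (ι x0) (ι y0)) :
    ∃ w : C(K, ℂ), (∃ lam : ℂ, ‖lam‖ = 1 ∧ ∀ x, w (φ x) = lam * w x) ∧ w x0 ≠ w y0 := by
  have hiso : ∀ n x y, dist (ι (φ^[n] x)) (ι (φ^[n] y)) = dist (ι x) (ι y) := by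
    intro n
    induction n with
    | zero => intro x y; rfl
    | succ n ih =>
      intro x y
      rw [Function.iterate_succ_apply, Function.iterate_succ_apply, ih, hiso1]
  obtain ⟨C, hC, hdens⟩ := aux_dens ι hι φ hiso x0
  have hCR : (0 : ℝ) < C := by exact_mod_cast hC
  let k : K → K → ℝ := fun x y => max 0 (1 - dist (ι x) (ι y))
  have hk0 : ∀ x y, 0 ≤ k x y := fun x y => le_max_left _ _
  have hk1 : ∀ x y, k x y ≤ 1 := fun x y => max_le zero_le_one (by linarith [dist_nonneg (x := ι x) (y := ι y)])
  have hkφ : ∀ x y, k (φ x) (φ y) = k x y := fun x y => by simp only [k, hiso1]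
  have hkl : ∀ x y z, |k x z - k y z| ≤ dist (ι x) (ι y) := by
    intro x y z
    refine (abs_max_sub_max_le_max _ _ _ _).trans ?_
    rw [sub_self, abs_zero]
    refine max_le dist_nonneg ?_
    rw [sub_sub_sub_cancel_left, dist_comm (ι x) (ι y)]
    exact abs_dist_sub_le _ _ _
  have hkge : ∀ x y, 1 - dist (ι x) (ι y) ≤ k x y := fun x y => le_max_right _ _
  have hkz : ∀ x y, 0 < k x y → dist (ι x) (ι y) < 1 := by
    intro x y h
    by_contra! h1
    have : k x y = 0 := max_eq_left (by linarith)
    linarith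
  set c : ℝ := 1 / (4 * C ^ 2) with hc
  have hc0 : 0 < c := by positivity
  let b : ℕ → ℝ := fun m => k x0 (φ^[m] x0) - k y0 (φ^[m] x0)
  let a : ℕ → ℝ := fun m => k (φ^[m] x0) x0
  have hlow : ∀ p : ℕ, c * (p : ℝ) ^ 2 ≤ ∑ m ∈ range p, ∑ l ∈ range p, a m * a l * b (m + l) := by
    intro p
    have hterm : ∀ m l, a m * a l * b (m + l) = a m * a l * k x0 (φ^[m + l] x0) := by
      intro m l
      by_cases h : 0 < a m * a l * k y0 (φ^[m + l] x0)
      · exfalso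
        have hk2 : 0 < k y0 (φ^[m + l] x0) := pos_of_mul_pos_right h (mul_nonneg (hk0 _ _) (hk0 _ _))
        have h' : 0 < a m * a l := pos_of_mul_pos_left h hk2.le
        have d1 := hkz _ _ (pos_of_mul_pos_left h' (hk0 _ _))
        have d2 := hkz _ _ (pos_of_mul_pos_right h' (hk0 _ _))
        have d3 := hkz _ _ hk2
        rw [← hiso m, ← Function.iterate_add_apply] at d2
        have := dist_triangle4 (ι y0) (ι (φ^[m + l] x0)) (ι (φ^[m] x0)) (ι x0)
        rw [dist_comm (ι x0)] at h3
        linarith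
      · have : a m * a l * k y0 (φ^[m + l] x0) = 0 :=
          le_antisymm (not_lt.1 h) (mul_nonneg (mul_nonneg (hk0 _ _) (hk0 _ _)) (hk0 _ _))
        simp only [b, mul_sub, this, sub_zero]
    simp_rw [hterm]
    set R := (range p).filter (fun m => dist (ι (φ^[m] x0)) (ι x0) < 1 / 4) with hR
    have hsub : R ⊆ range p := filter_subset _ _
    have hnn : ∀ m l, 0 ≤ a m * a l * k x0 (φ^[m + l] x0) := fun m l =>
      mul_nonneg (mul_nonneg (hk0 _ _) (hk0 _ _)) (hk0 _ _)
    have hRl : ∀ m ∈ R, ∀ l ∈ R, (1 / 4 : ℝ) ≤ a m * a l * k x0 (φ^[m + l] x0) := by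
      intro m hm l hl
      have d1 := (mem_filter.1 hm).2
      have d2 := (mem_filter.1 hl).2
      have a1 : 3 / 4 ≤ a m := by have := hkge (φ^[m] x0) x0; simp only [a]; linarith
      have a2 : 3 / 4 ≤ a l := by have := hkge (φ^[l] x0) x0; simp only [a]; linarith
      have a3 : 1 / 2 ≤ k x0 (φ^[m + l] x0) := by
        have := hkge x0 (φ^[m + l] x0)
        rw [← hiso m, ← Function.iterate_add_apply] at d2
        have := dist_triangle (ι (φ^[m + l] x0)) (ι (φ^[m] x0)) (ι x0)
        rw [dist_comm] at this
        linarith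
      calc (1 / 4 : ℝ) ≤ 3 / 4 * (3 / 4) * (1 / 2) := by norm_num
        _ ≤ _ := by gcongr
    have hp := hdens p
    rw [← hR] at hp
    have hpR : (p : ℝ) ≤ C * R.card := by exact_mod_cast hp
    calc c * (p : ℝ) ^ 2 ≤ c * (C * R.card) ^ 2 := by gcongr
      _ = ∑ m ∈ R, ∑ l ∈ R, (1 / 4 : ℝ) := by
        simp only [sum_const, nsmul_eq_mul, hc]; field_simp
      _ ≤ ∑ m ∈ R, ∑ l ∈ R, a m * a l * k x0 (φ^[m + l] x0) :=
        sum_le_sum fun m hm => sum_le_sum fun l hl => hRl m hm l hl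
      _ ≤ ∑ m ∈ R, ∑ l ∈ range p, a m * a l * k x0 (φ^[m + l] x0) :=
        sum_le_sum fun m hm => sum_le_sum_of_subset_of_nonneg hsub fun _ _ _ => hnn _ _
      _ ≤ _ := sum_le_sum_of_subset_of_nonneg hsub fun _ _ _ => sum_nonneg fun _ _ => hnn _ _
  have hex := fun p : ℕ => aux_fourier (p + 1) (by omega) a b (fun m => hk0 _ _) (fun m => hk1 _ _) c hc0
    (hlow (p + 1))
  choose L hL1 hL2 using hex
  let w : ℕ → K → ℂ := fun p x =>
    (∑ m ∈ range (2 * (p + 1)), L p ^ m * (k x (φ^[m] x0) : ℂ)) / ((2 * (p + 1) : ℕ) : ℂ)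
  have hpos : ∀ p : ℕ, (0 : ℝ) < ((2 * (p + 1) : ℕ) : ℝ) := fun p => by positivity
  have hwb : ∀ p x, ‖w p x‖ ≤ 1 := by
    intro p x
    simp only [w]
    rw [norm_div, Complex.norm_natCast, div_le_one (hpos p)]
    refine (norm_sum_le _ _).trans ?_
    refine (sum_le_card_nsmul _ _ 1 fun m _ => ?_).trans (by simp)
    rw [norm_mul, norm_pow, hL1, one_pow, one_mul, Complex.norm_real, Real.norm_of_nonneg (hk0 _ _)]
    exact hk1 _ _
  have hwl : ∀ p x y, ‖w p x - w p y‖ ≤ dist (ι x) (ι y) := by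
    intro p x y
    simp only [w]
    rw [← sub_div, ← sum_sub_distrib, norm_div, Complex.norm_natCast, div_le_iff₀ (hpos p)]
    refine (norm_sum_le _ _).trans ?_
    refine (sum_le_card_nsmul _ _ (dist (ι x) (ι y)) fun m _ => ?_).trans (by simp [mul_comm])
    rw [← mul_sub, ← Complex.ofReal_sub, norm_mul, norm_pow, hL1, one_pow, one_mul, Complex.norm_real]
    exact hkl _ _ _
  have hwe : ∀ p x, ‖w p (φ x) - L p * w p x‖ ≤ 2 / ((2 * (p + 1) : ℕ) : ℝ) := by
    intro p x
    have e : w p (φ x) - L p * w p x = ((k (φ x) x0 : ℂ) -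
        L p ^ (2 * (p + 1)) * (k (φ x) (φ^[2 * (p + 1)] x0) : ℂ)) / ((2 * (p + 1) : ℕ) : ℂ) := by
      simp only [w]
      rw [mul_div_assoc', ← sub_div]
      congr 1
      have h1 := sum_range_succ (fun m => L p ^ m * (k (φ x) (φ^[m] x0) : ℂ)) (2 * (p + 1))
      rw [sum_range_succ'] at h1
      have h2 : ∑ m ∈ range (2 * (p + 1)), L p ^ (m + 1) * (k (φ x) (φ^[m + 1] x0) : ℂ) =
          L p * ∑ m ∈ range (2 * (p + 1)), L p ^ m * (k x (φ^[m] x0) : ℂ) := by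
        rw [mul_sum]
        refine sum_congr rfl fun m _ => ?_
        rw [Function.iterate_succ_apply', hkφ, pow_succ]; ring
      rw [h2] at h1
      simp only [pow_zero, one_mul, Function.iterate_zero, id] at h1
      linear_combination -h1
    rw [e, norm_div, Complex.norm_natCast]
    gcongr
    refine (norm_sub_le _ _).trans ?_
    rw [norm_mul, norm_pow, hL1, one_pow, one_mul, Complex.norm_real, Complex.norm_real,
      Real.norm_of_nonneg (hk0 _ _), Real.norm_of_nonneg (hk0 _ _)]
    linarith [hk1 (φ x) x0, hk1 (φ x) (φ^[2 * (p + 1)] x0)]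
  have hwd : ∀ p, c / 4 ≤ ‖w p x0 - w p y0‖ := by
    intro p
    simp only [w]
    rw [← sub_div, ← sum_sub_distrib, norm_div, Complex.norm_natCast, le_div_iff₀ (hpos p)]
    have := hL2 p
    simp only [b, Complex.ofReal_sub, mul_sub] at this
    refine le_trans (le_of_eq ?_) this
    push_cast; ring
  have hlim : ∀ u : ℕ → ℂ, (∀ p, ‖u p‖ ≤ 1) →
      ∃ l, Filter.Tendsto u (Filter.hyperfilter ℕ : Filter ℕ) (nhds l) := by
    intro u hu
    obtain ⟨l, -, hl⟩ := (isCompact_closedBall (0 : ℂ) 1).ultrafilter_le_nhds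
      ((Filter.hyperfilter ℕ).map u) (by
        rw [Filter.le_principal_iff, Ultrafilter.mem_coe, Ultrafilter.mem_map]
        exact Filter.Eventually.of_forall fun p => by simpa using hu p)
    exact ⟨l, hl⟩
  obtain ⟨lam, hlam⟩ := hlim L fun p => (hL1 p).le
  choose W hW using fun x => hlim (fun p => w p x) (fun p => hwb p x)
  have hWl : ∀ x y, ‖W x - W y‖ ≤ dist (ι x) (ι y) := fun x y =>
    le_of_tendsto ((hW x).sub (hW y)).norm (Filter.Eventually.of_forall fun p => hwl p x y)
  have hWd : c / 4 ≤ ‖W x0 - W y0‖ :=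
    ge_of_tendsto ((hW x0).sub (hW y0)).norm (Filter.Eventually.of_forall fun p => hwd p)
  have hWc : Continuous W := by
    rw [continuous_iff_continuousAt]
    intro x
    rw [ContinuousAt, tendsto_iff_norm_sub_tendsto_zero]
    have hcd : Filter.Tendsto (fun y => dist (ι y) (ι x)) (nhds x) (nhds 0) := by
      have : Continuous fun y => dist (ι y) (ι x) := by fun_prop
      simpa using this.tendsto x
    exact squeeze_zero (fun _ => norm_nonneg _) (fun y => hWl y x) hcd
  refine ⟨⟨W, hWc⟩, ⟨lam, ?_, fun x => ?_⟩, ?_⟩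
  · refine tendsto_nhds_unique hlam.norm ?_
    simp only [hL1]
    exact tendsto_const_nhds
  · have h1 : Filter.Tendsto (fun p => ‖w p (φ x) - L p * w p x‖) (Filter.hyperfilter ℕ : Filter ℕ)
        (nhds 0) := by
      refine squeeze_zero (fun _ => norm_nonneg _) (fun p => hwe p x) ?_
      have h2 : Filter.Tendsto (fun p : ℕ => 2 / ((2 * (p + 1) : ℕ) : ℝ)) Filter.atTop (nhds 0) := by
        have := tendsto_one_div_add_atTop_nhds_zero_nat (𝕜 := ℝ)
        refine this.congr fun p => ?_
        push_cast; field_simp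
      exact h2.mono_left Nat.hyperfilter_le_atTop
    have h2 := tendsto_nhds_unique ((hW (φ x)).sub (hlam.mul (hW x))).norm h1
    exact sub_eq_zero.1 (norm_eq_zero.1 h2)
  · intro h
    simp only [ContinuousMap.coe_mk] at h
    rw [h, sub_self, norm_zero] at hWd
    linarith

end Aux

lemma aux_forward {K : Type*} [UniformSpace K] [CompactSpace K] [T2Space K]
    (φ : K → K) (hφ : Continuous φ) (h : DiscreteSpectrum φ) :
    Function.Bijective φ ∧ UniformEquicontinuous fun n : ℕ => φ^[n] := by
  let E := {p : C(K, ℂ) × Circle // ∀ x, p.1 (φ x) = (p.2 : ℂ) * p.1 x}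
  let Φ : K → E → ℂ := fun x e => e.1.1 x
  have hΦc : Continuous Φ := continuous_pi fun e => e.1.1.continuous
  have hΦi : Function.Injective Φ := by
    intro x y hxy
    by_contra hne
    have hall : ∀ f : C(K, ℂ), f x = f y := by
      have hcl : IsClosed {f : C(K, ℂ) | f x = f y} :=
        isClosed_eq (continuous_eval_const x) (continuous_eval_const y)
      have hsub : (↑(Submodule.span ℂ
          {f : C(K, ℂ) | f ≠ 0 ∧ ∃ lam : ℂ, ‖lam‖ = 1 ∧ ∀ x, f (φ x) = lam * f x}) :
          Set C(K, ℂ)) ⊆ {f : C(K, ℂ) | f x = f y} := by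
        intro f hf
        induction hf using Submodule.span_induction with
        | mem f hf =>
          obtain ⟨-, lam, h1, h2⟩ := hf
          exact congrFun hxy ⟨(f, ⟨lam, by simpa [Submonoid.unitSphere] using h1⟩), h2⟩
        | zero => simp
        | add f g _ _ hf hg =>
          simp only [Set.mem_ofPred_eq, ContinuousMap.add_apply] at *
          rw [hf, hg]
        | smul c f _ hf =>
          simp only [Set.mem_ofPred_eq, ContinuousMap.smul_apply] at *
          rw [hf]
      have := hcl.closure_subset_iff.2 hsub
      intro f
      exact this (h f)
    obtain ⟨f, h0, h1, -⟩ := exists_continuous_zero_one_of_isClosed (isClosed_singleton (x := x))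
      (isClosed_singleton (x := y)) (by simpa using hne)
    have := hall ⟨fun z => (f z : ℂ), by fun_prop⟩
    have h0' := h0 (Set.mem_singleton x)
    have h1' := h1 (Set.mem_singleton y)
    simp [h0', h1'] at this
  have hΦe : Topology.IsClosedEmbedding Φ := hΦc.isClosedEmbedding hΦi
  have hΦu : IsUniformInducing Φ := by
    rw [isUniformInducing_iff_uniformSpace]
    refine unique_uniformity_of_compact (γ := K) (t := inferInstance) ?_ rfl
    exact hΦe.isInducing.eq_induced.symm
  have hit : ∀ n x (e : E), Φ (φ^[n] x) e = (e.1.2 : ℂ) ^ n * Φ x e := by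
    intro n
    induction n with
    | zero => intro x e; simp
    | succ n ih =>
      intro x e
      rw [Function.iterate_succ_apply, ih, pow_succ, mul_assoc]
      congr 1
      exact e.2 x
  refine ⟨⟨?_, ?_⟩, ?_⟩
  · intro x y hxy
    apply hΦi
    funext e
    have h1 := hit 1 x e
    have h2 := hit 1 y e
    simp only [Function.iterate_one, pow_one] at h1 h2
    rw [hxy, h2] at h1
    exact (mul_left_cancel₀ (Circle.coe_ne_zero _) h1).symm
  · intro x
    let g : E → Circle := fun e => e.1.2
    have hcl := mapClusterPt_one_atTop_pow g
    let F : (E → Circle) → (E → ℂ) := fun u e => (u e : ℂ) * Φ x e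
    have hF : Continuous F := by
      refine continuous_pi fun e => ?_
      exact (continuous_subtype_val.comp (continuous_apply e) : Continuous fun u : E → Circle => (u e : ℂ)).mul continuous_const
    have h2 := hcl.continuousAt_comp (f := F) hF.continuousAt
    have h3 : MapClusterPt (Φ x) Filter.atTop (fun n : ℕ => Φ (φ^[n] x)) := by
      convert h2 using 1
      · funext e; simp [F]
      · funext n e; simp [F, hit, g]
    have hclosed : IsClosed (Φ '' Set.range φ) :=
      hΦe.isClosedMap _ (isCompact_range hφ).isClosed
    have h4 : Φ x ∈ Φ '' Set.range φ := by
      by_contra hn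
      have := h3.frequently (hclosed.isOpen_compl.mem_nhds hn)
      obtain ⟨n, hn1, hn2⟩ := (this.and_eventually (Filter.eventually_ge_atTop 1)).exists
      refine hn1 ⟨φ^[n] x, ?_, rfl⟩
      obtain ⟨m, rfl⟩ := Nat.exists_eq_add_of_le' hn2
      exact ⟨φ^[m] x, (Function.iterate_succ_apply' φ m x).symm⟩
    obtain ⟨y, hy, hyx⟩ := h4
    rwa [hΦi hyx] at hy
  · rw [hΦu.uniformEquicontinuous_iff]
    have key : ∀ e : E, UniformEquicontinuous fun (n : ℕ) (x : K) => Φ (φ^[n] x) e := by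
      intro e
      rw [Metric.uniformEquicontinuous_iff_right]
      intro ε hε
      have huc : UniformContinuous fun x => Φ x e :=
        CompactSpace.uniformContinuous_of_continuous e.1.1.continuous
      filter_upwards [huc (Metric.dist_mem_uniformity hε)] with p hp n
      rw [hit, hit, dist_eq_norm, ← mul_sub, norm_mul, norm_pow, Circle.norm_coe, one_pow, one_mul,
        ← dist_eq_norm]
      exact hp
    have := (uniformEquicontinuous_iInf_rng (ι := ℕ) (β := K) (α' := E → ℂ)
      (u := fun e : E => UniformSpace.comap (fun f : E → ℂ => f e) inferInstance)
      (F := fun n x => Φ (φ^[n] x))).2 (fun e => ?_)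
    · exact this
    · exact (@IsUniformInducing.uniformEquicontinuous_iff _ _ _ _ (UniformSpace.comap (fun f : E → ℂ => f e) inferInstance) _ _
        (fun n x => Φ (φ^[n] x)) (fun f : E → ℂ => f e)
        (@IsUniformInducing.mk _ _ (UniformSpace.comap (fun f : E → ℂ => f e) inferInstance) _ _ rfl)).2 (key e)

lemma aux_backward {K : Type*} [UniformSpace K] [CompactSpace K] [T2Space K]
    (φ : K → K) (hs : Function.Surjective φ)
    (he : UniformEquicontinuous fun n : ℕ => φ^[n]) : DiscreteSpectrum φ := by
  set S : Set C(K, ℂ) := {f : C(K, ℂ) | f ≠ 0 ∧ ∃ lam : ℂ, ‖lam‖ = 1 ∧ ∀ x, f (φ x) = lam * f x} with hS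
  let E : Submonoid C(K, ℂ) :=
    { carrier := {f | ∃ lam : ℂ, ‖lam‖ = 1 ∧ ∀ x, f (φ x) = lam * f x}
      one_mem' := ⟨1, by simp, by simp⟩
      mul_mem' := by
        rintro f g ⟨l, hl, hf⟩ ⟨m, hm, hg⟩
        refine ⟨l * m, by simp [hl, hm], fun x => ?_⟩
        simp only [ContinuousMap.mul_apply, hf, hg]; ring }
  have hE : ∀ f, f ∈ E ↔ ∃ lam : ℂ, ‖lam‖ = 1 ∧ ∀ x, f (φ x) = lam * f x := fun f => Iff.rfl
  have hstar : (E : Set C(K, ℂ)) ∪ star (E : Set C(K, ℂ)) = E := by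
    rw [Set.union_eq_left]
    intro f hf
    obtain ⟨l, hl, h⟩ := hf
    refine ⟨star l, by simpa using hl, fun x => ?_⟩
    have := congrArg star (h x)
    simpa [mul_comm] using this
  let A : StarSubalgebra ℂ C(K, ℂ) := StarAlgebra.adjoin ℂ (E : Set C(K, ℂ))
  have hA : (A : Set C(K, ℂ)) ⊆ Submodule.span ℂ S := by
    intro f hf
    have hf' : f ∈ Algebra.adjoin ℂ (E : Set C(K, ℂ)) := by
      have : f ∈ A.toSubalgebra := hf
      rwa [StarAlgebra.adjoin_toSubalgebra, hstar] at this
    rw [← Subalgebra.mem_toSubmodule, Algebra.adjoin_eq_span, Submonoid.closure_eq] at hf'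
    refine Submodule.span_le.2 ?_ hf'
    intro g hg
    by_cases h0 : g = 0
    · rw [h0]; exact Submodule.zero_mem _
    · exact Submodule.subset_span ⟨h0, hg⟩
  have hsep : A.SeparatesPoints := by
    intro x y hne
    obtain ⟨f, h0, h1, hf01⟩ := exists_continuous_zero_one_of_isClosed (isClosed_singleton (x := x))
      (isClosed_singleton (x := y)) (by simpa using hne)
    have h0' : f x = 0 := h0 (Set.mem_singleton x)
    have h1' : f y = 1 := h1 (Set.mem_singleton y)
    let ι : K → BoundedContinuousFunction ℕ ℝ := fun z =>
      BoundedContinuousFunction.ofNormedAddCommGroupDiscrete (fun n => 3 * f (φ^[n] z)) 3 (by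
        intro n
        have := hf01 (φ^[n] z)
        rw [Real.norm_of_nonneg (by linarith [this.1])]
        linarith [this.2])
    have hιa : ∀ z n, ι z n = 3 * f (φ^[n] z) := fun z n => rfl
    have hιc : Continuous ι := by
      rw [continuous_iff_continuousAt]
      intro z
      rw [ContinuousAt, Metric.tendsto_nhds]
      intro ε hε
      have huc : UniformContinuous fun x => 3 * f x :=
        CompactSpace.uniformContinuous_of_continuous (by fun_prop)
      have hU := huc (Metric.dist_mem_uniformity (half_pos hε))
      have h3 := he.equicontinuous z _ hU
      filter_upwards [h3] with w hw
      refine lt_of_le_of_lt ?_ (half_lt_self hε)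
      refine (BoundedContinuousFunction.dist_le (by positivity)).2 fun n => ?_
      have := hw n
      simp only [Set.mem_preimage, Set.mem_ofPred_eq] at this
      rw [dist_comm]
      exact this.le
    have hne' : ∀ x y, dist (ι (φ x)) (ι (φ y)) ≤ dist (ι x) (ι y) := by
      intro x y
      refine (BoundedContinuousFunction.dist_le dist_nonneg).2 fun n => ?_
      have := BoundedContinuousFunction.dist_coe_le_dist (f := ι x) (g := ι y) (n + 1)
      simpa only [hιa, Function.iterate_succ_apply] using this
    have h3 : 3 ≤ dist (ι x) (ι y) := by
      have := BoundedContinuousFunction.dist_coe_le_dist (f := ι x) (g := ι y) 0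
      simpa [hιa, h0', h1', Real.dist_eq] using this
    obtain ⟨w, hw, hwne⟩ := aux_sep ι hιc φ (aux_iso ι hιc φ hs hne') x y h3
    exact ⟨w, ⟨w, StarAlgebra.subset_adjoin ℂ _ hw, rfl⟩, hwne⟩
  have htop := ContinuousMap.starSubalgebra_topologicalClosure_eq_top_of_separatesPoints A hsep
  have hd : Dense (A : Set C(K, ℂ)) := by
    rw [dense_iff_closure_eq, ← StarSubalgebra.topologicalClosure_coe, htop]; rfl
  exact hd.mono hA

/-- Let `(K, φ)` be a topological dynamical system (with `K` carrying its
unique compatible uniformity as a compact Hausdorff space).  Then the Koopman operator `T_φ`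
has discrete spectrum on `C(K)` if and only if `φ` is bijective and the family
`{φ^n : n ∈ ℕ}` is uniformly equicontinuous. -/
theorem discreteSpectrum_iff_equicontinuous_and_invertible
    {K : Type*} [UniformSpace K] [CompactSpace K] [T2Space K]
    (φ : K → K) (hφ : Continuous φ) :
    DiscreteSpectrum φ ↔
      Function.Bijective φ ∧ UniformEquicontinuous fun n : ℕ => φ^[n] :=
  ⟨aux_forward φ hφ, fun h => aux_backward φ h.1.2 h.2⟩
end
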